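/- Let E be a real or complex Hilbert space, let U : ℝ → U(E) be a strongly continuous one-parameter group of unitary operators, and let E₊ and E₊' be closed subspaces of E such that both (E, E₊, U) and (E, E₊', U) are regular one-parameter groups. Then (E, E₊, U) and (E, E₊', U) are equivalent, i.e. there exists a unitary operator ψ : E → E with ψ(E₊) = E₊' and ψ ∘ U_t = U_t ∘ ψ for all t ∈ ℝ. -/

import Mathlib

open MeasureTheory

/-- `(E, E₊, U)` is a regular one-parameter group: `U` is a (strongly continuous)
one-parameter group of unitaries with `U_t E₊ ⊆ E₊` for `t ≥ 0`,
`⋂_{t∈ℝ} U_t E₊ = {0}` and `⋃_{t∈ℝ} U_t E₊` dense in `E`. -/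
def IsROPG {𝕜 E : Type*} [RCLike 𝕜] [NormedAddCommGroup E] [InnerProductSpace 𝕜 E]
    (Ep : Submodule 𝕜 E) (U : ℝ → (E ≃ₗᵢ[𝕜] E)) : Prop :=
  (∀ t : ℝ, 0 ≤ t → ∀ v ∈ Ep, U t v ∈ Ep) ∧
  (⋂ t : ℝ, (U t) '' (Ep : Set E)) = {(0 : E)} ∧
  Dense (⋃ t : ℝ, (U t) '' (Ep : Set E))

/-!
Let `A` be the generator of `U` and `V = (A + 1) (A - 1)⁻¹` its Cayley transform, a unitary
operator. The resolvent `(1 - A)⁻¹ = ∫₀^∞ e⁻ᵗ Uₜ dt` gives `V` explicitly, so that `V` maps `E₊`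
into itself, and bounded operators that commute with `V` commute with every `Uₜ`. Hence `⋂ₙ Vⁿ E₊`
and `(⋃ₙ Vⁿ E₊)ᗮ`, which reduce `V`, are invariant under `U` and therefore zero. By the Wold
decomposition `V` is then the bilateral shift on `⨁ₙ Vⁿ M` with `M = E₊ ⊖ V E₊`, and `E₊` is the
sum of the `Vⁿ M` with `0 ≤ n`.

It remains to see that `dim M` does not depend on `E₊`: a unitary identifying the bases of two
such spaces `M` and `M'` then extends along the shifts to one that commutes with `V`, hence with
`U`. If `b (n, i)` and `b' (n, j)` are the two shift bases, then `⟪b' (n, j), b (0, i)⟫` equals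
`⟪b' (0, j), b (-n, i)⟫`, so Parseval's identity evaluates `∑ ‖⟪b' (n, j), b (0, i)⟫‖²` over all
`n, i, j` both as `dim M` and as `dim M'`. When these are infinite, the two bases of `E` have the
same cardinality.
-/

open Set Function InnerProductSpace

section IntegralMem

variable {𝕜 E α : Type*} [RCLike 𝕜] [NormedAddCommGroup E] [NormedSpace 𝕜 E] [NormedSpace ℝ E]
  [IsScalarTower ℝ 𝕜 E] [CompleteSpace E] [MeasurableSpace α] {μ : Measure α}

theorem integral_mem_of_isClosed {K : Submodule 𝕜 E} (hK : IsClosed (K : Set E)) {f : α → E}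
    (hf : Integrable f μ) (hfK : ∀ᵐ a ∂μ, f a ∈ K) : ∫ a, f a ∂μ ∈ K := by
  rw [← Submodule.Quotient.mk_eq_zero]
  calc K.mkQL (∫ a, f a ∂μ) = ∫ a, K.mkQL (f a) ∂μ := (K.mkQL.integral_comp_comm hf).symm
    _ = 0 := integral_eq_zero_of_ae <| hfK.mono fun a ha ↦
      (Submodule.Quotient.mk_eq_zero K).2 ha

end IntegralMem

section OneParameterGroup

variable {𝕜 E : Type*} [RCLike 𝕜] [NormedAddCommGroup E] [NormedSpace 𝕜 E]

/-- A strongly continuous one-parameter group of invertible linear isometries of a normed space;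
on an inner product space these are the strongly continuous unitary groups. -/
structure IsOneParameterGroup (U : ℝ → E ≃ₗᵢ[𝕜] E) : Prop where
  zero_apply : ∀ x, U 0 x = x
  add_apply : ∀ s t x, U (s + t) x = U s (U t x)
  continuous_apply : ∀ x, Continuous fun t ↦ U t x

namespace IsOneParameterGroup

variable {U : ℝ → E ≃ₗᵢ[𝕜] E}

theorem apply_apply_neg (hU : IsOneParameterGroup U) (t : ℝ) (x : E) : U t (U (-t) x) = x := by
  rw [← hU.add_apply, add_neg_cancel, hU.zero_apply]

theorem commute (hU : IsOneParameterGroup U) (s t : ℝ) : Function.Commute (U s) (U t) := fun x ↦ by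
  rw [← hU.add_apply, add_comm, hU.add_apply]

theorem neg (hU : IsOneParameterGroup U) : IsOneParameterGroup fun t ↦ U (-t) where
  zero_apply x := by rw [neg_zero, hU.zero_apply]
  add_apply s t x := by rw [neg_add, hU.add_apply]
  continuous_apply x := (hU.continuous_apply x).comp continuous_neg

variable [NormedSpace ℝ E]

theorem continuous_exp_neg_smul (hU : IsOneParameterGroup U) (x : E) :
    Continuous fun t ↦ Real.exp (-t) • U t x :=
  (Real.continuous_exp.comp continuous_neg).smul (hU.continuous_apply x)

theorem norm_exp_neg_smul (t : ℝ) (x : E) : ‖Real.exp (-t) • U t x‖ = Real.exp (-t) * ‖x‖ := by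
  rw [norm_smul, LinearIsometryEquiv.norm_map, Real.norm_of_nonneg (Real.exp_pos _).le]

theorem integrableOn_exp_neg_smul (hU : IsOneParameterGroup U) (x : E) (a : ℝ) :
    IntegrableOn (fun t ↦ Real.exp (-t) • U t x) (Ioi a) :=
  ((integrableOn_exp_neg_Ioi a).mul_const ‖x‖).mono'
    (hU.continuous_exp_neg_smul x).aestronglyMeasurable (.of_forall fun t ↦
      (norm_exp_neg_smul t x).le)

variable [IsScalarTower ℝ 𝕜 E] (hU : IsOneParameterGroup U)

/-- The resolvent `(1 - A)⁻¹ = ∫₀^∞ e⁻ᵗ Uₜ dt` at `1` of the generator `A` of `U`. -/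
noncomputable def resolvent : E →L[𝕜] E :=
  LinearMap.mkContinuous
    { toFun := fun x ↦ ∫ t in Ioi (0 : ℝ), Real.exp (-t) • U t x
      map_add' := fun x y ↦ by
        simp only [map_add, smul_add]
        exact integral_add (hU.integrableOn_exp_neg_smul x 0) (hU.integrableOn_exp_neg_smul y 0)
      map_smul' := fun c x ↦ by
        simp only [map_smul, smul_comm _ c, integral_smul, RingHom.id_apply] }
    1 fun x ↦ by
      calc ‖∫ t in Ioi (0 : ℝ), Real.exp (-t) • U t x‖
          ≤ ∫ t in Ioi (0 : ℝ), Real.exp (-t) * ‖x‖ :=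
            norm_integral_le_of_norm_le ((integrableOn_exp_neg_Ioi 0).mul_const ‖x‖)
              (.of_forall fun t ↦ (norm_exp_neg_smul t x).le)
        _ = 1 * ‖x‖ := by rw [integral_mul_const, integral_exp_neg_Ioi_zero]

theorem resolvent_apply (x : E) :
    hU.resolvent x = ∫ t in Ioi (0 : ℝ), Real.exp (-t) • U t x :=
  rfl

variable [CompleteSpace E]

theorem resolvent_mem {K : Submodule 𝕜 E} (hK : IsClosed (K : Set E))
    (hUK : ∀ t, 0 ≤ t → ∀ x ∈ K, U t x ∈ K) {x : E} (hx : x ∈ K) : hU.resolvent x ∈ K :=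
  integral_mem_of_isClosed hK (hU.integrableOn_exp_neg_smul x 0) <|
    (ae_restrict_iff' measurableSet_Ioi).2 <| .of_forall fun t ht ↦
      K.smul_of_tower_mem _ (hUK t (mem_Ioi.1 ht).le x hx)

theorem map_resolvent (S : E →L[𝕜] E) (x : E) :
    S (hU.resolvent x) = ∫ t in Ioi (0 : ℝ), Real.exp (-t) • S (U t x) := by
  rw [resolvent_apply, ← S.integral_comp_comm (hU.integrableOn_exp_neg_smul x 0)]
  simp only [S.map_smul_of_tower]

theorem commute_resolvent {S : E →L[𝕜] E} (hS : ∀ t, Function.Commute S (U t)) :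
    Function.Commute S hU.resolvent := fun x ↦ by
  rw [map_resolvent, resolvent_apply]
  simp only [(hS _).eq]

theorem commute_apply_resolvent (t : ℝ) : Function.Commute (U t) hU.resolvent :=
  hU.commute_resolvent (S := (U t).toContinuousLinearEquiv) (hU.commute t)

theorem apply_resolvent (s : ℝ) (x : E) :
    U s (hU.resolvent x) = Real.exp s • ∫ t in Ioi s, Real.exp (-t) • U t x := by
  calc U s (hU.resolvent x) = ∫ t in Ioi 0, Real.exp (-t) • U s (U t x) :=
        hU.map_resolvent (U s).toContinuousLinearEquiv x
    _ = ∫ t in (s + ·) ⁻¹' Ioi s, Real.exp s • Real.exp (-(s + t)) • U (s + t) x := by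
        simp only [preimage_const_add_Ioi, sub_self, hU.add_apply, smul_smul, ← Real.exp_add,
          neg_add, add_neg_cancel_left]
    _ = Real.exp s • ∫ t in Ioi s, Real.exp (-t) • U t x := by
        rw [(measurePreserving_add_left volume s).setIntegral_preimage_emb
          (measurableEmbedding_addLeft s) (fun t ↦ Real.exp s • Real.exp (-t) • U t x),
          integral_smul]

theorem hasDerivAt_apply_resolvent (x : E) (s : ℝ) :
    HasDerivAt (fun s ↦ U s (hU.resolvent x)) (U s (hU.resolvent x) - U s x) s := by
  have hcont := hU.continuous_exp_neg_smul x
  have heq (s : ℝ) : U s (hU.resolvent x) = Real.exp s •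
      (hU.resolvent x - ∫ t in (0 : ℝ)..s, Real.exp (-t) • U t x) := by
    rw [apply_resolvent, resolvent_apply, ← intervalIntegral.integral_Ioi_sub_Ioi'
      (hU.integrableOn_exp_neg_smul x 0) (hU.integrableOn_exp_neg_smul x s), sub_sub_cancel]
  have hderiv := (Real.hasDerivAt_exp s).smul <|
    (intervalIntegral.integral_hasDerivAt_right (hcont.intervalIntegrable 0 s)
      hcont.aestronglyMeasurable.stronglyMeasurableAtFilter hcont.continuousAt).const_sub
        (hU.resolvent x)
  refine (hderiv.congr_of_eventuallyEq (.of_forall heq)).congr_deriv ?_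
  rw [heq s, smul_neg, smul_smul, ← Real.exp_add, add_neg_cancel, Real.exp_zero, one_smul]
  abel

theorem hasDerivAt_zero_apply_resolvent (x : E) :
    HasDerivAt (fun s ↦ U s (hU.resolvent x)) (hU.resolvent x - x) 0 := by
  simpa only [hU.zero_apply] using hU.hasDerivAt_apply_resolvent x 0

theorem resolvent_injective : Injective hU.resolvent := by
  refine (injective_iff_map_eq_zero _).2 fun x hx ↦ ?_
  have hderiv := hU.hasDerivAt_zero_apply_resolvent x
  simp only [hx, map_zero, zero_sub] at hderiv
  exact neg_eq_zero.1 (hderiv.unique (hasDerivAt_const _ _))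

theorem hasDerivAt_zero_apply_resolvent_neg (x : E) :
    HasDerivAt (fun s ↦ U s (hU.neg.resolvent x)) (x - hU.neg.resolvent x) 0 := by
  have h := (hU.neg.hasDerivAt_apply_resolvent x (-0)).scomp (0 : ℝ) (hasDerivAt_neg (0 : ℝ))
  simpa only [comp_def, neg_neg, neg_zero, hU.zero_apply, neg_smul, one_smul, neg_sub] using h

theorem commute_resolvent_resolvent_neg :
    Function.Commute hU.resolvent hU.neg.resolvent :=
  (hU.commute_resolvent (S := hU.neg.resolvent) fun t ↦ by
    simpa only [neg_neg] using (hU.neg.commute_apply_resolvent (-t)).symm).symm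

/-- The resolvent identity `(1 - A)⁻¹ + (1 + A)⁻¹ = 2 (1 - A)⁻¹ (1 + A)⁻¹`. -/
theorem resolvent_add_resolvent_neg (x : E) :
    hU.resolvent x + hU.neg.resolvent x = (2 : 𝕜) • hU.resolvent (hU.neg.resolvent x) := by
  have hcomm := hU.commute_resolvent_resolvent_neg
  have hderiv := hU.hasDerivAt_zero_apply_resolvent (hU.neg.resolvent x)
  rw [hcomm x] at hderiv ⊢
  have h := hderiv.unique (hU.hasDerivAt_zero_apply_resolvent_neg (hU.resolvent x))
  rw [sub_eq_sub_iff_add_eq_add] at h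
  rw [two_smul, h]

end IsOneParameterGroup

end OneParameterGroup

section UnitaryGroup

variable {𝕜 E : Type*} [RCLike 𝕜] [NormedAddCommGroup E] [InnerProductSpace 𝕜 E]

theorem commute_starProjection_of_map_eq (V : E ≃ₗᵢ[𝕜] E) {F : Submodule 𝕜 E}
    [F.HasOrthogonalProjection] (hF : F.map (V.toLinearEquiv : E →ₗ[𝕜] E) = F) :
    Function.Commute F.starProjection V := fun x ↦ by
  have h := F.starProjection_map_apply V (V x)
  rw [V.symm_apply_apply] at h
  rw [← h]
  simp only [hF]

namespace IsOneParameterGroup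

variable {U : ℝ → E ≃ₗᵢ[𝕜] E} [NormedSpace ℝ E] [IsScalarTower ℝ 𝕜 E] [CompleteSpace E]
  (hU : IsOneParameterGroup U)

theorem inner_resolvent_add_inner_resolvent (x y : E) :
    ⟪hU.resolvent x, hU.resolvent y - y⟫_𝕜 + ⟪hU.resolvent x - x, hU.resolvent y⟫_𝕜 = 0 := by
  have hderiv := (hU.hasDerivAt_zero_apply_resolvent x).inner 𝕜
    (hU.hasDerivAt_zero_apply_resolvent y)
  simp only [LinearIsometryEquiv.inner_map_map, hU.zero_apply] at hderiv
  exact hderiv.unique (hasDerivAt_const _ _)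

theorem norm_sub_two_smul_resolvent (x : E) : ‖x - (2 : 𝕜) • hU.resolvent x‖ = ‖x‖ := by
  have h := hU.inner_resolvent_add_inner_resolvent x x
  rw [inner_sub_left, inner_sub_right] at h
  have hsq : ⟪x - (2 : 𝕜) • hU.resolvent x, x - (2 : 𝕜) • hU.resolvent x⟫_𝕜 = ⟪x, x⟫_𝕜 := by
    simp only [two_smul, inner_sub_left, inner_sub_right, inner_add_left, inner_add_right]
    linear_combination 2 * h
  rw [norm_eq_sqrt_re_inner (𝕜 := 𝕜), hsq, ← norm_eq_sqrt_re_inner]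

/-- The cogenerator `(A + 1) (A - 1)⁻¹ = 1 - 2 (1 - A)⁻¹` of `U`, the Cayley transform of its
generator `A`. Its inverse is the cogenerator of `t ↦ U (-t)`. -/
noncomputable def cogenerator : E ≃ₗᵢ[𝕜] E where
  toLinearMap := (1 - (2 : 𝕜) • hU.resolvent : E →L[𝕜] E)
  invFun x := x - (2 : 𝕜) • hU.neg.resolvent x
  left_inv x := by
    have h := congr((2 : 𝕜) • $(hU.resolvent_add_resolvent_neg x))
    rw [hU.commute_resolvent_resolvent_neg x, smul_add] at h
    simp [smul_sub, ← h]
  right_inv x := by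
    have h := congr((2 : 𝕜) • $(hU.resolvent_add_resolvent_neg x))
    rw [smul_add] at h
    simp [smul_sub, ← h]
  norm_map' := hU.norm_sub_two_smul_resolvent

theorem cogenerator_apply (x : E) : hU.cogenerator x = x - (2 : 𝕜) • hU.resolvent x :=
  rfl

theorem cogenerator_mem {K : Submodule 𝕜 E} (hK : IsClosed (K : Set E))
    (hUK : ∀ t, 0 ≤ t → ∀ x ∈ K, U t x ∈ K) {x : E} (hx : x ∈ K) : hU.cogenerator x ∈ K :=
  K.sub_mem hx <| K.smul_mem _ <| hU.resolvent_mem hK hUK hx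

theorem commute_resolvent_of_commute_cogenerator {S : E →L[𝕜] E}
    (hS : Function.Commute S hU.cogenerator) : Function.Commute S hU.resolvent := fun x ↦ by
  have h := hS x
  rw [cogenerator_apply, cogenerator_apply, map_sub, map_smul, sub_right_inj] at h
  exact smul_right_injective E two_ne_zero h

theorem commute_of_commute_resolvent {S : E →L[𝕜] E} (hS : Function.Commute S hU.resolvent)
    (t : ℝ) : Function.Commute S (U t) := fun x ↦ by
  -- Orbits of `U` are differentiable only on the range of the resolvent, so the commutator `D` is
  -- moved there before differentiating.
  let D (s : ℝ) : E := S (U s x) - U s (S x)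
  have hRD (s : ℝ) : hU.resolvent (D s) = S (U s (hU.resolvent x)) - U s (hU.resolvent (S x)) := by
    rw [map_sub, ← hS, ← hU.commute_apply_resolvent s, ← hU.commute_apply_resolvent s]
  have hderiv (s : ℝ) :
      HasDerivAt (fun s ↦ hU.resolvent (D s)) (hU.resolvent (D s) - D s) s := by
    have h := ((S.restrictScalars ℝ).hasFDerivAt.comp_hasDerivAt s
      (hU.hasDerivAt_apply_resolvent x s)).sub (hU.hasDerivAt_apply_resolvent (S x) s)
    refine (h.congr_of_eventuallyEq (.of_forall hRD)).congr_deriv ?_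
    rw [hRD, ContinuousLinearMap.coe_restrictScalars', map_sub]
    simp only [D]
    abel
  have hinner (s : ℝ) :
      HasDerivAt (fun s ↦ ⟪hU.resolvent (D s), hU.resolvent (D s)⟫_𝕜) 0 s :=
    ((hderiv s).inner 𝕜 (hderiv s)).congr_deriv (hU.inner_resolvent_add_inner_resolvent _ _)
  have hconst : ⟪hU.resolvent (D t), hU.resolvent (D t)⟫_𝕜 =
      ⟪hU.resolvent (D 0), hU.resolvent (D 0)⟫_𝕜 :=
    is_const_of_deriv_eq_zero (fun s ↦ (hinner s).differentiableAt) (fun s ↦ (hinner s).deriv) t 0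
  have hD0 : D 0 = 0 := by simp only [D, hU.zero_apply, sub_self]
  rw [hD0, map_zero, inner_zero_left, inner_self_eq_zero] at hconst
  exact sub_eq_zero.1 <| hU.resolvent_injective <| hconst.trans (map_zero _).symm

theorem commute_of_commute_cogenerator {S : E →L[𝕜] E}
    (hS : Function.Commute S hU.cogenerator) (t : ℝ) : Function.Commute S (U t) :=
  hU.commute_of_commute_resolvent (hU.commute_resolvent_of_commute_cogenerator hS) t

theorem apply_mem_of_map_cogenerator_eq {F : Submodule 𝕜 E} (hF : IsClosed (F : Set E))
    (hVF : F.map (hU.cogenerator.toLinearEquiv : E →ₗ[𝕜] E) = F) (t : ℝ) {x : E} (hx : x ∈ F) :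
    U t x ∈ F := by
  have := hF.completeSpace_coe
  have h := hU.commute_of_commute_cogenerator (commute_starProjection_of_map_eq _ hVF) t x
  rw [Submodule.starProjection_eq_self_iff.2 hx] at h
  exact Submodule.starProjection_eq_self_iff.1 h

end IsOneParameterGroup

end UnitaryGroup

section HilbertBasis

variable {𝕜 E F ι κ : Type*} [RCLike 𝕜] [NormedAddCommGroup E] [InnerProductSpace 𝕜 E]
  [NormedAddCommGroup F] [InnerProductSpace 𝕜 F]

theorem continuousLinearMap_ext_hilbertBasis {G : Type*} [TopologicalSpace G] [T2Space G]
    [AddCommMonoid G] [Module 𝕜 G] (b : HilbertBasis ι 𝕜 E) {f g : E →L[𝕜] G}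
    (h : ∀ i, f (b i) = g (b i)) : f = g :=
  ContinuousLinearMap.ext_on (Submodule.dense_iff_topologicalClosure_eq_top.2 b.dense_span)
    (forall_mem_range.2 h)

theorem mem_orthogonal_of_hilbertBasis {M : Submodule 𝕜 E} (e : HilbertBasis ι 𝕜 M) {x : E}
    (hx : ∀ i, ⟪x, (e i : E)⟫_𝕜 = 0) : x ∈ Mᗮ := by
  have h : innerSL 𝕜 x ∘L M.subtypeL = 0 := continuousLinearMap_ext_hilbertBasis e hx
  exact (Submodule.mem_orthogonal' _ _).2 fun y hy ↦ congr($h ⟨y, hy⟩)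

theorem mem_iff_forall_inner_hilbertBasis_eq_zero (b : HilbertBasis ι 𝕜 E) {K : Submodule 𝕜 E}
    (hK : IsClosed (K : Set E)) {s : Set ι} (hs : ∀ i ∈ s, b i ∈ Kᗮ) (hsc : ∀ i ∉ s, b i ∈ K)
    {x : E} : x ∈ K ↔ ∀ i ∈ s, ⟪b i, x⟫_𝕜 = 0 := by
  refine ⟨fun hx i hi ↦ Submodule.inner_left_of_mem_orthogonal hx (hs i hi), fun hx ↦ ?_⟩
  refine hK.mem_of_tendsto (b.hasSum_repr x) (.of_forall fun t ↦ K.sum_mem fun i _ ↦ ?_)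
  by_cases hi : i ∈ s
  · rw [b.repr_apply_apply, hx i hi, zero_smul]
    exact K.zero_mem
  · exact K.smul_mem _ (hsc i hi)

theorem exists_linearIsometryEquiv_hilbertBasis [CompleteSpace F] (b : HilbertBasis ι 𝕜 E)
    (b' : HilbertBasis κ 𝕜 F) (τ : ι ≃ κ) : ∃ ψ : E ≃ₗᵢ[𝕜] F, ∀ i, ψ (b i) = b' (τ i) := by
  classical
  let c : HilbertBasis ι 𝕜 F := .mk (b'.orthonormal.comp τ τ.injective) <| by
    rw [τ.surjective.range_comp, b'.dense_span]
  have hc : ⇑c = b' ∘ τ := HilbertBasis.coe_mk _ _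
  refine ⟨b.repr.trans c.repr.symm, fun i ↦ ?_⟩
  rw [LinearIsometryEquiv.trans_apply, b.repr_self, c.repr_symm_single, hc, comp_apply]

theorem tsum_enorm_inner_sq (b : HilbertBasis ι 𝕜 E) (x : E) :
    ∑' i, ‖⟪b i, x⟫_𝕜‖ₑ ^ 2 = ‖x‖ₑ ^ 2 := by
  have h : HasSum (fun i ↦ ‖⟪b i, x⟫_𝕜‖ ^ 2) (‖x‖ ^ 2) := by
    have h := RCLike.hasSum_re 𝕜 (b.hasSum_inner_mul_inner x x)
    rw [inner_self_eq_norm_sq] at h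
    simpa only [inner_mul_symm_re_eq_norm, norm_mul, norm_inner_symm x, ← pow_two] using h
  calc ∑' i, ‖⟪b i, x⟫_𝕜‖ₑ ^ 2 = ∑' i, ENNReal.ofReal (‖⟪b i, x⟫_𝕜‖ ^ 2) := by
        simp only [ENNReal.ofReal_pow (norm_nonneg _), ofReal_norm]
    _ = ENNReal.ofReal (‖x‖ ^ 2) := by
        rw [← ENNReal.ofReal_tsum_of_nonneg (fun i ↦ by positivity) h.summable, h.tsum_eq]
    _ = ‖x‖ₑ ^ 2 := by rw [ENNReal.ofReal_pow (norm_nonneg _), ofReal_norm]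

theorem tsum_tsum_enorm_inner_sq {u : ι → E} (hu : Orthonormal 𝕜 u) (b : HilbertBasis κ 𝕜 E) :
    ∑' i, ∑' p, ‖⟪b p, u i⟫_𝕜‖ₑ ^ 2 = ENat.card ι := by
  simp only [tsum_enorm_inner_sq b, hu.enorm_eq_one, one_pow, ENNReal.tsum_one]

universe u in
theorem mk_le_mk_of_hilbertBasis {ι κ : Type u} [Infinite κ] (b : HilbertBasis ι 𝕜 E)
    (b' : HilbertBasis κ 𝕜 E) : Cardinal.mk ι ≤ Cardinal.mk κ := by
  let T (j : κ) : Set ι := {i | ⟪b i, b' j⟫_𝕜 ≠ 0}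
  have hcountable (j : κ) : (T j).Countable := by
    have h := (b.orthonormal.inner_products_summable (b' j)).countable_support
    refine h.mono fun i hi ↦ ?_
    exact pow_ne_zero 2 (norm_ne_zero_iff.2 hi)
  have hcover : ⋃ j, T j = univ := by
    refine iUnion_eq_univ_iff.2 fun i ↦ ?_
    by_contra! hi
    have h : innerSL 𝕜 (b i) = 0 := continuousLinearMap_ext_hilbertBasis b' fun j ↦ not_not.1 (hi j)
    exact b.orthonormal.ne_zero i (inner_self_eq_zero.1 congr($h (b i)))
  calc Cardinal.mk ι = Cardinal.mk (⋃ j, T j) := by rw [hcover, Cardinal.mk_univ]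
    _ ≤ Cardinal.mk κ * ⨆ j, Cardinal.mk (T j) := Cardinal.mk_iUnion_le T
    _ ≤ Cardinal.mk κ * Cardinal.aleph0 := by
        gcongr
        exact ciSup_le' fun j ↦ Cardinal.le_aleph0_iff_set_countable.2 (hcountable j)
    _ = Cardinal.mk κ := Cardinal.mul_aleph0_eq (Cardinal.aleph0_le_mk κ)

end HilbertBasis

section Filtration

variable {𝕜 E : Type*} [RCLike 𝕜] [NormedAddCommGroup E] [InnerProductSpace 𝕜 E]

theorem starProjection_eq_of_mem_orthogonal_inf {K L : Submodule 𝕜 E}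
    [K.HasOrthogonalProjection] [L.HasOrthogonalProjection] (hLK : L ≤ K) {z : E}
    (hz : z ∈ (K ⊓ Lᗮ)ᗮ) : K.starProjection z = L.starProjection z := by
  have hL := L.starProjection_apply_mem z
  have hzK := K.sub_starProjection_mem_orthogonal z
  have hw : K.starProjection z - L.starProjection z ∈ K ⊓ Lᗮ := by
    refine ⟨K.sub_mem (K.starProjection_apply_mem z) (hLK hL), ?_⟩
    rw [← sub_sub_sub_cancel_left]
    exact Lᗮ.sub_mem (L.sub_starProjection_mem_orthogonal z) (Submodule.orthogonal_le hLK hzK)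
  have hw' : K.starProjection z - L.starProjection z ∈ (K ⊓ Lᗮ)ᗮ := by
    rw [← sub_sub_cancel z (K.starProjection z)]
    refine Submodule.sub_mem _ (Submodule.sub_mem _ hz ?_) ?_
    · exact Submodule.orthogonal_le inf_le_left hzK
    · exact Submodule.orthogonal_le inf_le_right (L.le_orthogonal_orthogonal hL)
  exact sub_eq_zero.1 <| Submodule.disjoint_def.1 (Submodule.orthogonal_disjoint _) _ hw hw'

theorem orthogonal_iSup_inf_orthogonal_eq_bot {K : ℤ → Submodule 𝕜 E}
    [∀ n, (K n).HasOrthogonalProjection] (hK : Antitone K) (hbot : ⨅ n, K n = ⊥)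
    (htop : (⨆ n, K n)ᗮ = ⊥) : (⨆ n, K n ⊓ (K (n + 1))ᗮ)ᗮ = ⊥ := by
  refine (Submodule.eq_bot_iff _).2 fun z hz ↦ ?_
  rw [← Submodule.iInf_orthogonal, Submodule.mem_iInf] at hz
  have hper : Periodic (fun n ↦ (K n).starProjection z) 1 := fun n ↦
    (starProjection_eq_of_mem_orthogonal_inf (hK (by lia)) (hz n)).symm
  have hconst (m n : ℤ) : (K m).starProjection z = (K n).starProjection z := by
    simpa using (hper.int_mul_eq m).trans (hper.int_mul_eq n).symm
  have hzero (n : ℤ) : (K n).starProjection z = 0 := by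
    rw [← Submodule.mem_bot 𝕜, ← hbot, Submodule.mem_iInf]
    exact fun m ↦ hconst n m ▸ (K m).starProjection_apply_mem z
  rw [← Submodule.mem_bot 𝕜, ← htop, ← Submodule.iInf_orthogonal, Submodule.mem_iInf]
  exact fun n ↦ (K n).starProjection_apply_eq_zero_iff.1 (hzero n)

end Filtration

section BilateralShift

universe u

variable {𝕜 : Type*} {E : Type u} [RCLike 𝕜] [NormedAddCommGroup E] [InnerProductSpace 𝕜 E]

/-- The image `Vⁿ K` of a subspace `K` under a unitary `V`. -/
def zpowMap (V : E ≃ₗᵢ[𝕜] E) (K : Submodule 𝕜 E) (n : ℤ) : Submodule 𝕜 E :=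
  K.map ((V ^ n).toLinearEquiv : E →ₗ[𝕜] E)

/-- The wandering subspace `K ⊖ VK`, as the orthogonal complement of `VK` within `K`. -/
def wandering (V : E ≃ₗᵢ[𝕜] E) (K : Submodule 𝕜 E) : Submodule 𝕜 E :=
  K ⊓ (zpowMap V K 1)ᗮ

/-- `K` is an outgoing subspace for the unitary `V` in the sense of Lax and Phillips: the discrete
analogue of a regular one-parameter group. Density of `⋃ Vⁿ K` is expressed by the vanishing of its
orthogonal complement. -/
structure IsOutgoing (V : E ≃ₗᵢ[𝕜] E) (K : Submodule 𝕜 E) : Prop where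
  isClosed : IsClosed (K : Set E)
  apply_mem : ∀ x ∈ K, V x ∈ K
  iInf_zpowMap : ⨅ n, zpowMap V K n = ⊥
  orthogonal_iSup_zpowMap : (⨆ n, zpowMap V K n)ᗮ = ⊥

/-- The Hilbert basis `b` exhibits `V` as a bilateral shift, of multiplicity the cardinality
of `ι`. -/
def IsShiftBasis {ι : Type*} (V : E ≃ₗᵢ[𝕜] E) (b : HilbertBasis (ℤ × ι) 𝕜 E) : Prop :=
  ∀ n i, V (b (n, i)) = b (n + 1, i)

/-- The subspace `K` is the closed span of the vectors `b (n, i)` with `0 ≤ n`, expressed as the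
orthogonal complement of the remaining ones. -/
def IsAdaptedBasis {ι : Type*} (K : Submodule 𝕜 E) (b : HilbertBasis (ℤ × ι) 𝕜 E) : Prop :=
  ∀ x, x ∈ K ↔ ∀ p ∈ {p : ℤ × ι | p.1 < 0}, ⟪b p, x⟫_𝕜 = 0

section ZpowMap

variable {V : E ≃ₗᵢ[𝕜] E} {K : Submodule 𝕜 E}

theorem zpow_apply_mem_zpowMap {x : E} (hx : x ∈ K) (n : ℤ) : (V ^ n) x ∈ zpowMap V K n :=
  Submodule.mem_map_of_mem hx

variable (V K) in
theorem zpowMap_zero : zpowMap V K 0 = K :=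
  K.map_id

variable (V K) in
theorem zpowMap_zpowMap (m n : ℤ) :
    zpowMap V (zpowMap V K n) m = zpowMap V K (m + n) := by
  rw [zpowMap, zpowMap, zpowMap, ← Submodule.map_comp, zpow_add]
  rfl

instance [K.HasOrthogonalProjection] (n : ℤ) : (zpowMap V K n).HasOrthogonalProjection :=
  inferInstanceAs (K.map ((V ^ n).toLinearEquiv : E →ₗ[𝕜] E)).HasOrthogonalProjection

theorem zpowMap_wandering (n : ℤ) :
    zpowMap V (wandering V K) n = zpowMap V K n ⊓ (zpowMap V K (n + 1))ᗮ := by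
  rw [← zpowMap_zpowMap, zpowMap, wandering, Submodule.map_inf _ (V ^ n).injective,
    Submodule.map_orthogonal_equiv]
  rfl

theorem isClosed_zpowMap (hK : IsClosed (K : Set E)) (n : ℤ) :
    IsClosed (zpowMap V K n : Set E) :=
  (V ^ n).toHomeomorph.isClosed_image.2 hK

variable (V K) in
theorem zpowMap_one : zpowMap V K 1 = K.map (V.toLinearEquiv : E →ₗ[𝕜] E) := by
  rw [zpowMap, zpow_one]

theorem map_iInf_zpowMap :
    (⨅ n, zpowMap V K n).map (V.toLinearEquiv : E →ₗ[𝕜] E) = ⨅ n, zpowMap V K n := by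
  rw [Submodule.map_iInf _ V.injective]
  simp only [← zpowMap_one, zpowMap_zpowMap]
  exact (Equiv.addLeft 1).surjective.iInf_comp (zpowMap V K)

theorem map_orthogonal_iSup_zpowMap :
    (⨆ n, zpowMap V K n)ᗮ.map (V.toLinearEquiv : E →ₗ[𝕜] E) = (⨆ n, zpowMap V K n)ᗮ := by
  rw [Submodule.map_orthogonal_equiv, Submodule.map_iSup]
  simp only [← zpowMap_one, zpowMap_zpowMap]
  rw [← (Equiv.addLeft (1 : ℤ)).surjective.iSup_comp (zpowMap V K)]
  rfl

theorem antitone_zpowMap (hV : ∀ x ∈ K, V x ∈ K) : Antitone (zpowMap V K) :=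
  antitone_int_of_succ_le fun n ↦ by
    rw [← zpowMap_zpowMap, zpowMap_one]
    exact Submodule.map_mono (Submodule.map_le_iff_le_comap.2 hV)

end ZpowMap

namespace IsOutgoing

variable {V : E ≃ₗᵢ[𝕜] E} {K : Submodule 𝕜 E}

theorem orthonormal_zpow_apply {ι : Type*} (hK : IsOutgoing V K) {e : ι → E}
    (he : Orthonormal 𝕜 e) (heK : ∀ i, e i ∈ wandering V K) :
    Orthonormal 𝕜 fun p : ℤ × ι ↦ (V ^ p.1) (e p.2) := by
  have hlt {m n : ℤ} (hmn : m < n) (i j : ι) : ⟪(V ^ m) (e i), (V ^ n) (e j)⟫_𝕜 = 0 := by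
    have hi := zpow_apply_mem_zpowMap (V := V) (heK i) m
    rw [zpowMap_wandering] at hi
    have hj := zpow_apply_mem_zpowMap (V := V) (heK j).1 n
    exact Submodule.inner_left_of_mem_orthogonal (antitone_zpowMap hK.apply_mem hmn hj) hi.2
  refine ⟨fun p ↦ ?_, ?_⟩
  · rw [LinearIsometryEquiv.norm_map, he.norm_eq_one]
  · rintro ⟨m, i⟩ ⟨n, j⟩ hne
    obtain hmn | rfl | hmn := lt_trichotomy m n
    · exact hlt hmn i j
    · exact (LinearIsometryEquiv.inner_map_map _ _ _).trans
        (he.inner_eq_zero fun hij ↦ hne (congrArg (Prod.mk m) hij))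
    · exact inner_eq_zero_symm.1 (hlt hmn j i)

theorem orthogonal_span_zpow_apply {ι : Type*} [CompleteSpace E] (hK : IsOutgoing V K)
    (e : HilbertBasis ι 𝕜 (wandering V K)) :
    (Submodule.span 𝕜 (range fun p : ℤ × ι ↦ (V ^ p.1) (e p.2 : E)))ᗮ = ⊥ := by
  have := hK.isClosed.completeSpace_coe
  rw [← le_bot_iff, ← orthogonal_iSup_inf_orthogonal_eq_bot (antitone_zpowMap hK.apply_mem)
    hK.iInf_zpowMap hK.orthogonal_iSup_zpowMap]
  intro z hz
  simp only [← zpowMap_wandering, ← Submodule.iInf_orthogonal, Submodule.mem_iInf]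
  intro n
  rw [zpowMap, ← Submodule.map_orthogonal_equiv, ← (V ^ n).apply_symm_apply z]
  refine Submodule.mem_map_of_mem <| mem_orthogonal_of_hilbertBasis e fun i ↦ ?_
  rw [← (V ^ n).inner_map_map, LinearIsometryEquiv.apply_symm_apply]
  exact Submodule.inner_left_of_mem_orthogonal (Submodule.subset_span (mem_range_self (n, i))) hz

theorem exists_isShiftBasis [CompleteSpace E] (hK : IsOutgoing V K) :
    ∃ (ι : Type u) (b : HilbertBasis (ℤ × ι) 𝕜 E), IsShiftBasis V b ∧ IsAdaptedBasis K b := by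
  have : CompleteSpace (wandering V K) :=
    (hK.isClosed.inter (Submodule.isClosed_orthogonal _)).completeSpace_coe
  obtain ⟨s, e, -⟩ := exists_hilbertBasis 𝕜 (wandering V K)
  let v (p : ℤ × s) : E := (V ^ p.1) (e p.2)
  have hv : Orthonormal 𝕜 v :=
    hK.orthonormal_zpow_apply (e.orthonormal.comp_linearIsometry (wandering V K).subtypeₗᵢ)
      fun i ↦ (e i).2
  let b : HilbertBasis (ℤ × s) 𝕜 E := .mkOfOrthogonalEqBot hv (hK.orthogonal_span_zpow_apply e)
  have hb (p : ℤ × s) : b p = (V ^ p.1) (e p.2) :=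
    congrFun (HilbertBasis.coe_mkOfOrthogonalEqBot hv _) p
  have hanti := antitone_zpowMap hK.apply_mem
  refine ⟨s, b, fun n i ↦ ?_, fun x ↦ mem_iff_forall_inner_hilbertBasis_eq_zero b hK.isClosed
    (fun p (hp : p.1 < 0) ↦ ?_) fun p (hp : ¬p.1 < 0) ↦ ?_⟩
  · rw [hb, hb, add_comm, zpow_one_add]
    rfl
  · have h := zpow_apply_mem_zpowMap (V := V) (e p.2).2 p.1
    rw [zpowMap_wandering, ← hb] at h
    exact Submodule.orthogonal_le ((zpowMap_zero V K).ge.trans (hanti hp)) h.2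
  · rw [hb]
    exact (zpowMap_zero V K).le (hanti (not_lt.1 hp) (zpow_apply_mem_zpowMap (e p.2).2.1 p.1))

end IsOutgoing

namespace IsShiftBasis

variable {ι κ : Type u} {V : E ≃ₗᵢ[𝕜] E} {b : HilbertBasis (ℤ × ι) 𝕜 E}
  {b' : HilbertBasis (ℤ × κ) 𝕜 E}

theorem zpow_apply (hb : IsShiftBasis V b) (m n : ℤ) (i : ι) :
    (V ^ m) (b (n, i)) = b (m + n, i) := by
  induction m with
  | zero => rw [zpow_zero, zero_add, LinearIsometryEquiv.coe_one, id]
  | succ m ih =>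
    rw [add_comm (m : ℤ), zpow_one_add, LinearIsometryEquiv.coe_mul, comp_apply, ih, hb, add_comm 1,
      add_right_comm]
  | pred m ih =>
    refine V.injective ?_
    rw [hb, ← add_sub_right_comm, sub_add_cancel, ← ih, ← comp_apply (f := V),
      ← LinearIsometryEquiv.coe_mul, ← zpow_one_add, add_sub_cancel]

theorem inner_eq_inner_neg (hb : IsShiftBasis V b) (hb' : IsShiftBasis V b') (n : ℤ) (i : ι)
    (j : κ) : ⟪b' (n, j), b (0, i)⟫_𝕜 = ⟪b' (0, j), b (-n, i)⟫_𝕜 := by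
  rw [← (V ^ (-n)).inner_map_map, hb.zpow_apply, hb'.zpow_apply, neg_add_cancel, add_zero]

theorem enatCard_eq (hb : IsShiftBasis V b) (hb' : IsShiftBasis V b') :
    ENat.card ι = ENat.card κ := by
  have hcard {α β : Type u} (c : HilbertBasis (ℤ × α) 𝕜 E) (d : HilbertBasis (ℤ × β) 𝕜 E) :
      (ENat.card α : ENNReal) = ∑' (i) (j) (n), ‖⟪d (n, j), c (0, i)⟫_𝕜‖ₑ ^ 2 := by
    rw [← tsum_tsum_enorm_inner_sq (c.orthonormal.comp _ (Prod.mk_right_injective 0)) d]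
    refine tsum_congr fun i ↦ ?_
    rw [ENNReal.tsum_prod', ENNReal.tsum_comm]
    rfl
  have heq (i : ι) (j : κ) :
      ∑' n, ‖⟪b' (n, j), b (0, i)⟫_𝕜‖ₑ ^ 2 = ∑' n, ‖⟪b (n, i), b' (0, j)⟫_𝕜‖ₑ ^ 2 := by
    rw [← (Equiv.neg ℤ).tsum_eq]
    refine tsum_congr fun n ↦ ?_
    rw [hb.inner_eq_inner_neg hb', Equiv.neg_apply, neg_neg, ← inner_conj_symm, RCLike.enorm_conj]
  have h : (ENat.card ι : ENNReal) = ENat.card κ := by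
    rw [hcard b b', hcard b' b, ENNReal.tsum_comm]
    exact tsum_congr fun j ↦ tsum_congr fun i ↦ heq i j
  exact_mod_cast h

theorem nonempty_equiv (hb : IsShiftBasis V b) (hb' : IsShiftBasis V b') : Nonempty (ι ≃ κ) := by
  have hcard := hb.enatCard_eq hb'
  obtain hι | hι := finite_or_infinite ι
  · have hκ : Finite κ := ENat.card_lt_top.1 (hcard ▸ ENat.card_lt_top.2 hι)
    rw [ENat.card_eq_coe_natCard, ENat.card_eq_coe_natCard] at hcard
    exact Finite.card_eq.1 (by exact_mod_cast hcard)
  · have hκ : Infinite κ := ENat.card_eq_top.1 (hcard ▸ ENat.card_eq_top.2 hι)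
    have h : Cardinal.mk (ℤ × ι) = Cardinal.mk (ℤ × κ) :=
      le_antisymm (mk_le_mk_of_hilbertBasis b b') (mk_le_mk_of_hilbertBasis b' b)
    rw [Cardinal.mk_prod, Cardinal.mk_prod] at h
    exact Cardinal.eq.1 (by simpa using h)

theorem exists_commute_image_eq [CompleteSpace E] {K K' : Submodule 𝕜 E} (hb : IsShiftBasis V b)
    (hb' : IsShiftBasis V b') (hK : IsAdaptedBasis K b) (hK' : IsAdaptedBasis K' b') :
    ∃ ψ : E ≃ₗᵢ[𝕜] E, ψ '' (K : Set E) = K' ∧ Function.Commute ψ V := by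
  obtain ⟨σ⟩ := hb.nonempty_equiv hb'
  obtain ⟨ψ, hψ⟩ := exists_linearIsometryEquiv_hilbertBasis b b' ((Equiv.refl ℤ).prodCongr σ)
  have hmem (x : E) : ψ x ∈ K' ↔ x ∈ K := by
    rw [hK, hK', ← ((Equiv.refl ℤ).prodCongr σ).forall_congr_right]
    simp only [← hψ, ψ.inner_map_map]
    rfl
  refine ⟨ψ, ?_, fun x ↦ ?_⟩
  · ext x
    rw [← ψ.apply_symm_apply x, ψ.injective.mem_set_image]
    exact (hmem _).symm
  · have hcomm : (ψ.toContinuousLinearEquiv : E →L[𝕜] E) ∘L V.toContinuousLinearEquiv =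
        (V.toContinuousLinearEquiv : E →L[𝕜] E) ∘L ψ.toContinuousLinearEquiv :=
      continuousLinearMap_ext_hilbertBasis b fun ⟨n, i⟩ ↦ by
        calc ψ (V (b (n, i))) = b' (n + 1, σ i) := by rw [hb, hψ]; rfl
          _ = V (ψ (b (n, i))) := by rw [hψ, ← hb']; rfl
    exact congr($hcomm x)

end IsShiftBasis

end BilateralShift

section Cogenerator

variable {𝕜 E : Type*} [RCLike 𝕜] [NormedAddCommGroup E] [InnerProductSpace 𝕜 E] [CompleteSpace E]
  [NormedSpace ℝ E] [IsScalarTower ℝ 𝕜 E] {U : ℝ → E ≃ₗᵢ[𝕜] E} {K : Submodule 𝕜 E}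

theorem iInf_zpowMap_cogenerator_eq_bot (hU : IsOneParameterGroup U)
    (hK : IsClosed (K : Set E)) (hUK : ⋂ t, U t '' (K : Set E) = {0}) :
    ⨅ n, zpowMap hU.cogenerator K n = ⊥ := by
  refine (Submodule.eq_bot_iff _).2 fun x hx ↦ ?_
  have hclosed : IsClosed ((⨅ n, zpowMap hU.cogenerator K n : Submodule 𝕜 E) : Set E) := by
    rw [Submodule.coe_iInf]
    exact isClosed_iInter fun n ↦ isClosed_zpowMap hK n
  have hmem (t : ℝ) : U t x ∈ K := by
    have h := hU.apply_mem_of_map_cogenerator_eq hclosed map_iInf_zpowMap t hx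
    exact (zpowMap_zero _ K).le ((Submodule.mem_iInf _).1 h 0)
  rw [← mem_singleton_iff, ← hUK, mem_iInter]
  exact fun t ↦ ⟨U (-t) x, hmem (-t), hU.apply_apply_neg t x⟩

theorem orthogonal_iSup_zpowMap_cogenerator_eq_bot (hU : IsOneParameterGroup U)
    (hUK : Dense (⋃ t, U t '' (K : Set E))) :
    (⨆ n, zpowMap hU.cogenerator K n)ᗮ = ⊥ := by
  refine (Submodule.eq_bot_iff _).2 fun x hx ↦ hUK.eq_zero_of_inner_right 𝕜 fun u hu ↦ ?_
  obtain ⟨t, y, hy, rfl⟩ := mem_iUnion.1 hu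
  have h := hU.apply_mem_of_map_cogenerator_eq (Submodule.isClosed_orthogonal _)
    map_orthogonal_iSup_zpowMap (-t) hx
  have hyK : y ∈ ⨆ n, zpowMap hU.cogenerator K n :=
    Submodule.mem_iSup_of_mem 0 ((zpowMap_zero _ K).ge hy)
  rw [← hU.apply_apply_neg t x, LinearIsometryEquiv.inner_map_map]
  exact Submodule.inner_right_of_mem_orthogonal hyK h

theorem IsROPG.isOutgoing_cogenerator (hR : IsROPG K U) (hU : IsOneParameterGroup U)
    (hK : IsClosed (K : Set E)) : IsOutgoing hU.cogenerator K where
  isClosed := hK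
  apply_mem _ hx := hU.cogenerator_mem hK hR.1 hx
  iInf_zpowMap := iInf_zpowMap_cogenerator_eq_bot hU hK hR.2.1
  orthogonal_iSup_zpowMap := orthogonal_iSup_zpowMap_cogenerator_eq_bot hU hR.2.2

end Cogenerator

/-- **Uniqueness of the positive subspace of a regular one-parameter group.**
If `(E, E₊, U)` and `(E, E₊', U)` are both regular one-parameter groups (for the same
strongly continuous unitary one-parameter group `U` on the real or complex Hilbert
space `E`), then they are equivalent: there is a unitary `ψ : E → E` with
`ψ(E₊) = E₊'` and `ψ ∘ U_t = U_t ∘ ψ` for all `t ∈ ℝ`. -/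
theorem ROPG_independent_of_subspace {𝕜 E : Type*} [RCLike 𝕜] [NormedAddCommGroup E]
    [InnerProductSpace 𝕜 E] [CompleteSpace E]
    (U : ℝ → (E ≃ₗᵢ[𝕜] E))
    (hU0 : ∀ v : E, U 0 v = v)
    (hUadd : ∀ s t : ℝ, ∀ v : E, U (s + t) v = U s (U t v))
    (hUcont : ∀ v : E, Continuous fun t : ℝ => U t v)
    (Ep Ep' : Submodule 𝕜 E)
    (hEp : IsClosed (Ep : Set E)) (hEp' : IsClosed (Ep' : Set E))
    (hR : IsROPG Ep U) (hR' : IsROPG Ep' U) :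
    ∃ ψ : E ≃ₗᵢ[𝕜] E, ψ '' (Ep : Set E) = (Ep' : Set E) ∧
      ∀ t : ℝ, ∀ v : E, ψ (U t v) = U t (ψ v) := by
  let _ : InnerProductSpace ℝ E := InnerProductSpace.rclikeToReal 𝕜 E
  have hU : IsOneParameterGroup U := ⟨hU0, hUadd, hUcont⟩
  obtain ⟨_, b, hb, hbK⟩ := (hR.isOutgoing_cogenerator hU hEp).exists_isShiftBasis
  obtain ⟨_, b', hb', hbK'⟩ := (hR'.isOutgoing_cogenerator hU hEp').exists_isShiftBasis
  obtain ⟨ψ, hψ, hcomm⟩ := hb.exists_commute_image_eq hb' hbK hbK'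
  exact ⟨ψ, hψ, hU.commute_of_commute_cogenerator (S := ψ.toContinuousLinearEquiv) hcomm⟩
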